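/- arXiv:2007.07140 — 3 statements merged into one kernel-verified Lean document; each statement's English description precedes it below -/
import Mathlib

section
/- Let G be a finite simple graph on vertex set {v_1,…,v_n} in which every vertex has even degree, and fix an orientation of its edges so that the graph polynomial F_G = ∏_{(i,j)∈E}(x_j − x_i) ∈ ℝ[x_1,…,x_n] is defined. Suppose F_G has a nonzero almost central coefficient, i.e. there is ξ ∈ ℤ_{≥0}^n with [x^ξ]F_G ≠ 0 and |ξ_i − deg_G(v_i)/2| ≤ 1 for all i. Then for every integer k ≥ 2, the graph polynomial F_H of the Cartesian product H = G □ C_{2k} (with any fixed orientation of its edges) has a nonzero central coefficient: the coefficient of ∏_{w ∈ V(H)} x_w^{deg_H(w)/2} in F_H is nonzero. Note that deg_H((v_i,u)) = deg_G(v_i) + 2 is even for every vertex (v_i,u) of H. -/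
/-!
The central coefficient of `F_H`, `H = G □ C_n`, is computed by a transfer matrix. For each layer
`t` of the cycle let `S_t` be the set of vertices `v` for which the factor
`x_{(v,t+1)} - x_{(v,t)}` contributes `-x_{(v,t)}`. The remaining factors in layer `t` form a copy
of `F_G`, from which the coefficient of `x^{deg/2 + 1_{S_{t-1}} - 1_{S_t}}` is needed. Hence the
central coefficient equals `tr (A ^ n)`, where the rows and columns of `A` are indexed by subsets
of `V` and `A(S, T) = (-1)^|T| [x^{deg/2 + 1_S - 1_T}] F_G`
(`coeff_graphPoly_boxOrientation`).

Replacing the chosen endpoint of every edge of `G` by the other one shows `Aᵀ = ± A`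
(`transferMatrix_transpose`). An almost central coefficient is up to sign an entry of `A`, so
`A ≠ 0` (`transferMatrix_ne_zero`). A nonzero real symmetric or antisymmetric matrix is not
nilpotent, and `tr (A ^ (2k)) = ± tr ((A ^ k)ᵀ A ^ k)` is up to sign the squared Frobenius norm of
`A ^ k ≠ 0` (`trace_pow_ne_zero`).
-/

open MvPolynomial Finset

/-- An orientation of a simple graph: a finite set of ordered pairs containing,
for each edge `{u, v}` of `G`, exactly one of `(u, v)` and `(v, u)`. -/
structure GraphOrientation {V : Type*} (G : SimpleGraph V) where
  edges : Finset (V × V)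
  adj_of_mem : ∀ e ∈ edges, G.Adj e.1 e.2
  mem_iff_not_swap_mem : ∀ u v : V, G.Adj u v → ((u, v) ∈ edges ↔ (v, u) ∉ edges)

/-- The graph polynomial `∏_{(i,j) ∈ E} (x_j - x_i)` associated to an orientation. -/
noncomputable def graphPoly {V : Type*} {G : SimpleGraph V} (D : GraphOrientation G) :
    MvPolynomial V ℝ :=
  ∏ e ∈ D.edges, (X e.2 - X e.1)

/-- The outdegree of a vertex in an orientation. -/
def GraphOrientation.outDeg {V : Type*} [DecidableEq V] {G : SimpleGraph V}
    (D : GraphOrientation G) (v : V) : ℕ :=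
  (D.edges.filter fun e => e.1 = v).card

/-- `G` is `f`-choosable: any assignment of lists of real colors with `|A_v| ≥ f v`
admits a proper coloring from the lists. -/
def Choosable {V : Type*} (G : SimpleGraph V) (f : V → ℕ) : Prop :=
  ∀ A : V → Finset ℝ, (∀ v, f v ≤ (A v).card) →
    ∃ c : V → ℝ, (∀ v, c v ∈ A v) ∧ ∀ u v : V, G.Adj u v → c u ≠ c v

/-- The list chromatic number. -/
noncomputable def chNumber {V : Type*} (G : SimpleGraph V) : ℕ :=
  sInf {m | Choosable G fun _ => m}

/-- The Alon–Tarsi number: the least `k` such that the graph polynomial has a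
monomial `x^d` with nonzero coefficient and `max_v d_v = k - 1`. -/
noncomputable def ATNumber {V : Type*} (G : SimpleGraph V) : ℕ :=
  sInf {k | ∃ (D : GraphOrientation G) (d : V →₀ ℕ),
    MvPolynomial.coeff d (graphPoly D) ≠ 0 ∧ d.support.sup d + 1 = k}

instance {α β : Type*} {G : SimpleGraph α} {H : SimpleGraph β}
    [DecidableEq α] [DecidableEq β] [DecidableRel G.Adj] [DecidableRel H.Adj] :
    DecidableRel (G.boxProd H).Adj :=
  fun _ _ => decidable_of_iff _ SimpleGraph.boxProd_adj.symm

/-! ### Change of orientation -/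

/-- Reversing arcs changes the graph polynomial only by a sign. -/
theorem graphPoly_eq_C_mul {V : Type*} {G : SimpleGraph V} (D₁ D₂ : GraphOrientation G) :
    ∃ c : ℝ, c ≠ 0 ∧ graphPoly D₁ = C c * graphPoly D₂ := by
  classical
  have key : ∀ u v, G.Adj u v → ((u, v) ∉ D₂.edges ↔ (v, u) ∈ D₂.edges) := fun u v h =>
    (D₂.mem_iff_not_swap_mem v u h.symm).symm
  refine ⟨∏ e ∈ D₁.edges, if e ∈ D₂.edges then 1 else -1, ?_, ?_⟩
  · refine Finset.prod_ne_zero_iff.mpr fun e _ => ?_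
    split_ifs <;> norm_num
  · have h2 : graphPoly D₂ = ∏ e ∈ D₁.edges,
        ((X (if e ∈ D₂.edges then e else e.swap).2 -
          X (if e ∈ D₂.edges then e else e.swap).1 : MvPolynomial V ℝ)) := by
      symm
      refine Finset.prod_bij (fun e _ => if e ∈ D₂.edges then e else e.swap) ?_ ?_ ?_ ?_
      · rintro ⟨u, v⟩ he
        have := key u v (D₁.adj_of_mem _ he)
        split_ifs with h
        · exact h
        · exact this.1 h
      · rintro ⟨u, v⟩ he ⟨u', v'⟩ he' h
        have h1 := (D₁.mem_iff_not_swap_mem u v (D₁.adj_of_mem _ he)).1 he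
        have h1' := (D₁.mem_iff_not_swap_mem u' v' (D₁.adj_of_mem _ he')).1 he'
        split_ifs at h <;> simp only [Prod.swap, Prod.mk.injEq] at h <;>
          obtain ⟨rfl, rfl⟩ := h
        · rfl
        · exact absurd he' h1
        · exact absurd he' h1
        · rfl
      · rintro ⟨u, v⟩ he
        have hadj := D₂.adj_of_mem _ he
        by_cases h : (u, v) ∈ D₁.edges
        · exact ⟨(u, v), h, by simp [he]⟩
        · refine ⟨(v, u), (D₁.mem_iff_not_swap_mem v u hadj.symm).2 h, ?_⟩
          have := (key v u hadj.symm).2 he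
          simp [this]
      · intros; rfl
    rw [h2, graphPoly, map_prod, ← Finset.prod_mul_distrib]
    refine Finset.prod_congr rfl fun e _ => ?_
    split_ifs <;> simp

/-! ### Coefficients of products in disjoint sets of variables -/

theorem coeff_prod_rename {V τ : Type*} [Fintype V] [Fintype τ] [DecidableEq V] [DecidableEq τ]
    (P : τ → MvPolynomial V ℝ) (e : V × τ →₀ ℕ) :
    coeff e (∏ t, rename (fun v => (v, t)) (P t)) =
      ∏ t, coeff (Finsupp.equivFunOnFinite.symm fun v => e (v, t)) (P t) := by
  have hP : ∀ t, rename (fun v => (v, t)) (P t) = ∑ a ∈ (P t).support,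
      monomial (Finsupp.mapDomain (fun v => (v, t)) a) (coeff a (P t)) := by
    intro t
    conv_lhs => rw [(P t).as_sum]
    simp only [map_sum, rename_monomial]
  have hcond : ∀ f : τ → V →₀ ℕ, (∑ t, Finsupp.mapDomain (fun v => (v, t)) (f t) = e) ↔
      f = fun t => Finsupp.equivFunOnFinite.symm fun v => e (v, t) := by
    intro f
    have hval : ∀ v t, (∑ t, Finsupp.mapDomain (fun v => (v, t)) (f t)) (v, t) = f t v := by
      intro v t
      rw [Finsupp.finsetSum_apply, Finset.sum_eq_single t]
      · exact Finsupp.mapDomain_apply (f := fun v => (v, t))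
          (fun a b h => (Prod.mk.inj h).1) (f t) v
      · intro b _ hb
        refine Finsupp.mapDomain_of_notMem_range _ _ ?_
        rintro ⟨w, hw⟩
        exact hb (Prod.mk.inj hw).2
      · simp
    constructor
    · intro h
      ext t v
      rw [← hval, h]
      rfl
    · intro h
      ext ⟨v, t⟩
      rw [hval, h]
      rfl
  simp_rw [hP]
  rw [Finset.prod_univ_sum, coeff_sum]
  have hmon : ∀ f : τ → V →₀ ℕ, ∏ t, monomial (Finsupp.mapDomain (fun v => (v, t)) (f t))
      (coeff (f t) (P t)) = monomial (∑ t, Finsupp.mapDomain (fun v => (v, t)) (f t))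
        (∏ t, coeff (f t) (P t)) := by
    intro f
    rw [monomial_sum_prod]
  simp_rw [hmon, coeff_monomial, hcond]
  rw [Finset.sum_ite_eq']
  split_ifs with h
  · rfl
  · rw [Fintype.mem_piFinset] at h
    push Not at h
    obtain ⟨t, ht⟩ := h
    symm
    exact Finset.prod_eq_zero (Finset.mem_univ t) (by simpa using ht)

/-! ### Closed walks and traces -/

/-- Walk expansion of `M ^ n`, weighted by an arbitrary function of the endpoints. -/
theorem sum_paths {ι : Type*} [Fintype ι] [DecidableEq ι] (M : Matrix ι ι ℝ) (n : ℕ) :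
    ∀ g : ι → ι → ℝ, ∑ σ : Fin (n + 1) → ι, g (σ 0) (σ (Fin.last n)) *
        ∏ t : Fin n, M (σ t.castSucc) (σ t.succ) = ∑ i, ∑ j, g i j * (M ^ n) i j := by
  induction n with
  | zero =>
    intro g
    rw [← (Equiv.funUnique (Fin 1) ι).symm.sum_comp]
    simp [Matrix.one_apply]
  | succ n ih =>
    intro g
    rw [← (Fin.consEquiv (fun _ : Fin (n + 2) => ι)).sum_comp, Fintype.sum_prod_type]
    refine Finset.sum_congr rfl fun i _ => ?_
    have := ih (fun j l => g i l * M i j)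
    simp only [Fin.consEquiv_apply, Fin.prod_univ_succ, Fin.cons_zero, Fin.castSucc_zero,
      Fin.cons_succ, ← Fin.succ_last, ← Fin.succ_castSucc]
    simp only [mul_assoc] at this
    rw [this, Finset.sum_comm]
    simp_rw [pow_succ', Matrix.mul_apply, Finset.mul_sum]

theorem sum_cyclic {ι : Type*} [Fintype ι] [DecidableEq ι] (M : Matrix ι ι ℝ) (n : ℕ) [NeZero n] :
    ∑ σ : Fin n → ι, ∏ t : Fin n, M (σ t) (σ (t + 1)) = (M ^ n).trace := by
  obtain ⟨m, rfl⟩ := Nat.exists_eq_succ_of_ne_zero (NeZero.ne n)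
  have := sum_paths M m (fun i j => M j i)
  simp_rw [Nat.succ_eq_add_one, Fin.prod_univ_castSucc, Fin.coeSucc_eq_succ, Fin.last_add_one]
  simp_rw [mul_comm (∏ _, _)]
  rw [this, Finset.sum_comm]
  simp [Matrix.trace, pow_succ', Matrix.mul_apply]

/-- A nonzero real (anti)symmetric matrix is not nilpotent, since `N * N = 0` forces
`Nᵀ * N = 0`; and the trace of `M ^ (2 * k)` is, up to a scalar, that of
`(M ^ k)ᵀ * M ^ k`. -/
theorem trace_pow_ne_zero {ι : Type*} [Fintype ι] [DecidableEq ι] (M : Matrix ι ι ℝ) (ε : ℝ)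
    (hsymm : M.transpose = ε • M) (hM : M ≠ 0) (k : ℕ) :
    (M ^ (2 * k)).trace ≠ 0 := by
  have hsq : ∀ (N : Matrix ι ι ℝ) (c : ℝ), N.transpose = c • N → N * N = 0 → N = 0 := by
    intro N c hc h
    apply Matrix.conjTranspose_mul_self_eq_zero.mp
    rw [Matrix.conjTranspose_eq_transpose_of_trivial, hc, Matrix.smul_mul, h, smul_zero]
  have hT : ∀ m, (M ^ m).transpose = ε ^ m • M ^ m := by
    intro m
    rw [Matrix.transpose_pow, hsymm, smul_pow]
  have h2 : ∀ m, M ^ 2 ^ m ≠ 0 := by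
    intro m
    induction m with
    | zero => simpa using hM
    | succ m ih =>
      intro h
      rw [pow_succ, mul_two, pow_add] at h
      exact ih (hsq _ _ (hT _) h)
  have hk : M ^ k ≠ 0 := fun h => h2 k (pow_eq_zero_of_le Nat.lt_two_pow_self.le h)
  intro h
  apply hk
  apply Matrix.trace_conjTranspose_mul_self_eq_zero_iff.mp
  rw [Matrix.conjTranspose_eq_transpose_of_trivial, hT, Matrix.smul_mul, ← pow_add, ← two_mul,
    Matrix.trace_smul, h, smul_zero]

/-! ### The product orientation -/

/-- The orientation of `G □ C_{n+3}` that copies `D` in every layer `V × {t}` and directs each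
cycle edge from `(v, t)` to `(v, t + 1)`. -/
noncomputable def boxOrientation {V : Type*} [Fintype V] [DecidableEq V] {G : SimpleGraph V}
    (D : GraphOrientation G) (n : ℕ) :
    GraphOrientation (G.boxProd (SimpleGraph.cycleGraph (n + 3))) where
  edges := (D.edges ×ˢ (univ : Finset (Fin (n + 3)))).image
      (fun p => ((p.1.1, p.2), (p.1.2, p.2))) ∪
    (univ : Finset (V × Fin (n + 3))).image (fun p => (p, (p.1, p.2 + 1)))
  adj_of_mem := by
    intro e he
    rw [Finset.mem_union, Finset.mem_image, Finset.mem_image] at he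
    rw [SimpleGraph.boxProd_adj]
    rcases he with ⟨p, hp, rfl⟩ | ⟨p, -, rfl⟩
    · exact Or.inl ⟨D.adj_of_mem _ (Finset.mem_product.1 hp).1, rfl⟩
    · refine Or.inr ⟨SimpleGraph.cycleGraph_adj.2 (Or.inr ?_), rfl⟩
      simp
  mem_iff_not_swap_mem := by
    -- `t + 1 + 1 = t` fails because the cycle has at least three vertices.
    have h2 : ∀ t : Fin (n + 3), t + 1 + 1 ≠ t := by
      intro t h
      rw [add_assoc, add_eq_left] at h
      have := congrArg Fin.val h
      rw [Fin.val_add, Fin.val_one, Fin.val_zero, Nat.mod_eq_of_lt (by omega)] at this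
      omega
    have h1 : ∀ t : Fin (n + 3), t + 1 ≠ t := by
      intro t h
      rw [add_eq_left] at h
      have := congrArg Fin.val h
      rw [Fin.val_one, Fin.val_zero] at this
      omega
    have hmem : ∀ (u v : V) (s t : Fin (n + 3)),
        ((u, s), (v, t)) ∈ (D.edges ×ˢ (univ : Finset (Fin (n + 3)))).image
            (fun p => ((p.1.1, p.2), (p.1.2, p.2))) ∪
          (univ : Finset (V × Fin (n + 3))).image (fun p => (p, (p.1, p.2 + 1))) ↔
        ((u, v) ∈ D.edges ∧ s = t) ∨ (u = v ∧ t = s + 1) := by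
      intro u v s t
      simp only [Finset.mem_union, Finset.mem_image, Finset.mem_product, Finset.mem_univ,
        and_true, true_and, Prod.exists, Prod.mk.injEq]
      constructor
      · rintro (⟨a, b, c, h, ⟨rfl, rfl⟩, rfl, rfl⟩ | ⟨a, b, ⟨rfl, rfl⟩, rfl, rfl⟩)
        · exact Or.inl ⟨h, rfl⟩
        · exact Or.inr ⟨rfl, rfl⟩
      · rintro (⟨h, rfl⟩ | ⟨rfl, rfl⟩)
        · exact Or.inl ⟨u, v, s, h, ⟨rfl, rfl⟩, rfl, rfl⟩
        · exact Or.inr ⟨u, s, ⟨rfl, rfl⟩, rfl, rfl⟩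
    rintro ⟨u, s⟩ ⟨v, t⟩ h
    rw [hmem, hmem]
    rw [SimpleGraph.boxProd_adj] at h
    rcases h with ⟨h, hst⟩ | ⟨h, huv⟩
    · dsimp only at h hst
      subst hst
      have := D.mem_iff_not_swap_mem u v h
      have hne := h.ne
      have := (h1 s).symm
      tauto
    · dsimp only at h huv
      subst huv
      have hloop : (u, u) ∉ D.edges := fun hu => (D.adj_of_mem _ hu).ne rfl
      rw [SimpleGraph.cycleGraph_adj, sub_eq_iff_eq_add', sub_eq_iff_eq_add'] at h
      have h2s := h2 s
      have h2t := h2 t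
      constructor
      · rintro (⟨h, -⟩ | ⟨-, rfl⟩)
        · exact absurd h hloop
        · rintro (⟨h, -⟩ | ⟨-, h⟩)
          · exact hloop h
          · exact h2s h.symm
      · intro h'
        right
        refine ⟨rfl, ?_⟩
        rcases h with h | h
        · exact absurd (Or.inr ⟨rfl, by rw [h]⟩) h'
        · rw [h]

theorem graphPoly_boxOrientation {V : Type*} [Fintype V] [DecidableEq V] {G : SimpleGraph V}
    (D : GraphOrientation G) (n : ℕ) :
    graphPoly (boxOrientation D n) =
      (∏ t : Fin (n + 3), rename (fun v => (v, t)) (graphPoly D)) *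
        ∏ t : Fin (n + 3), ∏ v : V, (X (v, t + 1) - X (v, t)) := by
  rw [graphPoly, boxOrientation, Finset.prod_union, Finset.prod_image, Finset.prod_image,
    Finset.prod_product_right, ← Finset.univ_product_univ, Finset.prod_product_right]
  · simp [graphPoly, map_prod]
  · rintro a - b - h
    exact (Prod.mk.inj h).1
  · rintro ⟨⟨a, b⟩, c⟩ - ⟨⟨a', b'⟩, c'⟩ - h
    simp only [Prod.mk.injEq] at h ⊢
    tauto
  · rw [Finset.disjoint_left]
    intro e he he'
    rw [Finset.mem_image] at he he'
    obtain ⟨p, hp, rfl⟩ := he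
    obtain ⟨q, -, hq⟩ := he'
    have := D.adj_of_mem _ (Finset.mem_product.1 hp).1
    simp only [Prod.ext_iff] at hq
    exact this.ne (hq.1.1.symm.trans hq.2.1)

/-! ### The transfer matrix -/

/-- The squarefree monomial `∏_{v ∈ S} x_v`. -/
noncomputable def varProd {V : Type*} (S : Finset V) : MvPolynomial V ℝ := ∏ v ∈ S, X v

/-- The indicator of `S` as an exponent vector. -/
noncomputable def indic {V : Type*} (S : Finset V) : V →₀ ℕ := ∑ v ∈ S, Finsupp.single v 1

theorem prod_X_eq_monomial {V ι : Type*} (s : Finset ι) (f : ι → V) :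
    ∏ i ∈ s, (X (f i) : MvPolynomial V ℝ) = monomial (∑ i ∈ s, Finsupp.single (f i) 1) 1 :=
  (monomial_sum_one s _).symm

theorem varProd_eq_monomial {V : Type*} (S : Finset V) : varProd S = monomial (indic S) 1 :=
  prod_X_eq_monomial S _

theorem indic_apply {V : Type*} [DecidableEq V] (S : Finset V) (v : V) :
    indic S v = if v ∈ S then 1 else 0 := by
  simp [indic, Finsupp.finsetSum_apply, Finsupp.single_apply]

/-- The exponent vector `v ↦ deg v / 2 + 1`: the restriction to one layer of the central exponent
of `G □ C_n`. -/
noncomputable def centralExp {V : Type*} [Fintype V] (G : SimpleGraph V) [DecidableRel G.Adj] :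
    V →₀ ℕ :=
  Finsupp.equivFunOnFinite.symm fun v => G.degree v / 2 + 1

/-- The matrix indexed by subsets of `V` with `(S, T)` entry
`(-1)^|T| [x^{deg/2 + 1_S - 1_T}] F_G`. Multiplying `F_G` by `x^T x^{Sᶜ}` and reading off the
coefficient at `deg/2 + 1` avoids negative exponents, for which the entry is `0`. -/
noncomputable def transferMatrix {V : Type*} [Fintype V] [DecidableEq V] {G : SimpleGraph V}
    [DecidableRel G.Adj] (D : GraphOrientation G) : Matrix (Finset V) (Finset V) ℝ :=
  Matrix.of fun S T => (-1) ^ #T * coeff (centralExp G) (graphPoly D * (varProd T * varProd Sᶜ))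

/-- The transfer-matrix formula. In the expansion of the cycle edges, `σ t` is the set of `v` for
which the edge from `(v, t)` to `(v, t + 1)` contributes `-x_{(v,t)}` rather than
`x_{(v,t+1)}`; layer `t` then receives the extra monomial `x^{σ t} x^{(σ (t-1))ᶜ}`. -/
theorem coeff_graphPoly_boxOrientation {V : Type*} [Fintype V] [DecidableEq V]
    {G : SimpleGraph V} [DecidableRel G.Adj] (D : GraphOrientation G) (n : ℕ) :
    coeff (Finsupp.equivFunOnFinite.symm fun w : V × Fin (n + 3) => G.degree w.1 / 2 + 1)
      (graphPoly (boxOrientation D n)) = (transferMatrix D ^ (n + 3)).trace := by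
  have hedge : ∀ t : Fin (n + 3),
      ∏ v : V, (X (v, t + 1) - X (v, t) : MvPolynomial (V × Fin (n + 3)) ℝ) =
      ∑ S : Finset V, C ((-1) ^ #S) * rename (fun v => (v, t)) (varProd S) *
        rename (fun v => (v, t + 1)) (varProd Sᶜ) := by
    intro t
    rw [Finset.prod_sub, Finset.powerset_univ]
    refine Finset.sum_congr rfl fun S _ => ?_
    simp only [varProd, map_prod, rename_X, Finset.compl_eq_univ_sdiff, map_pow, map_neg, map_one]
    ring
  rw [graphPoly_boxOrientation]
  simp_rw [hedge]
  rw [Finset.prod_univ_sum, Fintype.piFinset_univ, Finset.mul_sum, coeff_sum, ← sum_cyclic]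
  refine Finset.sum_congr rfl fun σ _ => ?_
  have hgroup : (∏ t : Fin (n + 3), rename (fun v => (v, t)) (graphPoly D)) *
      ∏ t, (C ((-1) ^ #(σ t)) * rename (fun v => (v, t)) (varProd (σ t)) *
        rename (fun v => (v, t + 1)) (varProd (σ t)ᶜ)) =
      ∏ t : Fin (n + 3), rename (fun v => (v, t)) (C ((-1) ^ #(σ t)) *
        (graphPoly D * (varProd (σ t) * varProd (σ (t - 1))ᶜ))) := by
    have hshift := Equiv.prod_comp (Equiv.addRight (1 : Fin (n + 3)))
      fun t => rename (fun v => (v, t)) (varProd (σ (t - 1))ᶜ)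
    simp only [Equiv.coe_addRight, add_sub_cancel_right] at hshift
    rw [Finset.prod_mul_distrib, hshift, ← Finset.prod_mul_distrib, ← Finset.prod_mul_distrib]
    refine Finset.prod_congr rfl fun t _ => ?_
    simp only [map_mul, rename_C]
    ring
  rw [hgroup, coeff_prod_rename, ← Equiv.prod_comp (Equiv.addRight (1 : Fin (n + 3)))]
  refine Finset.prod_congr rfl fun t _ => ?_
  simp only [Equiv.coe_addRight, add_sub_cancel_right, coeff_C_mul, transferMatrix,
    Matrix.of_apply]
  rfl

/-! ### Symmetry of the transfer matrix -/

theorem sum_edges_eq_degree {V : Type*} [Fintype V] [DecidableEq V] {G : SimpleGraph V}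
    [DecidableRel G.Adj] (D : GraphOrientation G) (v : V) :
    (∑ e ∈ D.edges, Finsupp.single e.1 1 + ∑ e ∈ D.edges, Finsupp.single e.2 1 : V →₀ ℕ) v =
      G.degree v := by
  have hN : G.neighborFinset v = (D.edges.filter fun e => e.1 = v).image Prod.snd ∪
      (D.edges.filter fun e => e.2 = v).image Prod.fst := by
    ext w
    simp only [SimpleGraph.mem_neighborFinset, Finset.mem_union, Finset.mem_image,
      Finset.mem_filter, Prod.exists, exists_eq_right]
    constructor
    · intro h
      have := D.mem_iff_not_swap_mem v w h
      by_cases h' : (w, v) ∈ D.edges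
      · exact Or.inr ⟨w, v, ⟨h', rfl⟩, rfl⟩
      · exact Or.inl (this.2 h')
    · rintro (h | ⟨a, b, ⟨h, rfl⟩, rfl⟩)
      · exact D.adj_of_mem _ h
      · exact (D.adj_of_mem _ h).symm
  rw [← SimpleGraph.card_neighborFinset_eq_degree, hN, Finset.card_union_of_disjoint,
    Finset.card_image_of_injOn, Finset.card_image_of_injOn]
  · simp [Finsupp.single_apply]
  · rintro ⟨a, b⟩ h ⟨a', b'⟩ h' hh
    simp at h h' hh ⊢
    exact ⟨hh, h.2.trans h'.2.symm⟩
  · rintro ⟨a, b⟩ h ⟨a', b'⟩ h' hh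
    simp at h h' hh ⊢
    exact ⟨h.2.trans h'.2.symm, hh⟩
  · rw [Finset.disjoint_left]
    intro w h h'
    simp only [Finset.mem_image, Finset.mem_filter, Prod.exists, exists_eq_right] at h h'
    obtain ⟨a, b, ⟨hab, rfl⟩, rfl⟩ := h'
    exact (D.mem_iff_not_swap_mem _ _ (D.adj_of_mem _ h)).1 h hab

/-- The exponent of the monomial of `F_G` obtained by choosing the tail variable from the arcs in
`s` and the head variable from the other arcs. -/
noncomputable def arcExp {V : Type*} [DecidableEq V] {G : SimpleGraph V}
    (D : GraphOrientation G) (s : Finset (V × V)) : V →₀ ℕ :=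
  ∑ e ∈ D.edges \ s, Finsupp.single e.2 1 + ∑ e ∈ s, Finsupp.single e.1 1

theorem coeff_eq_sum {V : Type*} [Fintype V] [DecidableEq V] {G : SimpleGraph V}
    (D : GraphOrientation G) (m : V →₀ ℕ) (S T : Finset V) :
    coeff m (graphPoly D * (varProd T * varProd Sᶜ)) = ∑ s ∈ D.edges.powerset,
      (-1) ^ #s * if arcExp D s + (indic T + indic Sᶜ) = m then (1 : ℝ) else 0 := by
  rw [graphPoly, Finset.prod_sub, Finset.sum_mul, coeff_sum]
  refine Finset.sum_congr rfl fun s _ => ?_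
  have : ((-1) ^ #s : MvPolynomial V ℝ) = C ((-1) ^ #s) := by simp
  rw [varProd_eq_monomial, varProd_eq_monomial, prod_X_eq_monomial,
    prod_X_eq_monomial, mul_assoc, mul_assoc, monomial_mul, ← mul_assoc (monomial _ _),
    monomial_mul, monomial_mul, this, coeff_C_mul, coeff_monomial]
  simp only [mul_one, arcExp]
  congr

/-- Swapping every choice in the expansion (arcs, `S` and `T`) reflects the exponent about
`centralExp G`. -/
theorem arcExp_add_arcExp {V : Type*} [Fintype V] [DecidableEq V] {G : SimpleGraph V}
    [DecidableRel G.Adj] (hEven : ∀ v, Even (G.degree v)) (D : GraphOrientation G)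
    {s : Finset (V × V)} (hs : s ⊆ D.edges) (S T : Finset V) :
    (arcExp D s + (indic T + indic Sᶜ)) + (arcExp D (D.edges \ s) + (indic S + indic Tᶜ)) =
      centralExp G + centralExp G := by
  have h : arcExp D s + arcExp D (D.edges \ s) =
      ∑ e ∈ D.edges, Finsupp.single e.1 1 + ∑ e ∈ D.edges, Finsupp.single e.2 1 := by
    rw [arcExp, arcExp, Finset.sdiff_sdiff_eq_self hs,
      ← Finset.sum_sdiff (f := fun e : V × V => Finsupp.single e.1 1) hs,
      ← Finset.sum_sdiff (f := fun e : V × V => Finsupp.single e.2 1) hs]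
    abel
  ext v
  have hv := DFunLike.congr_fun h v
  rw [sum_edges_eq_degree] at hv
  obtain ⟨r, hr⟩ := hEven v
  simp only [Finsupp.add_apply] at hv ⊢
  simp only [indic_apply, centralExp, Finsupp.equivFunOnFinite_symm_apply_apply, Finset.mem_compl]
  split_ifs <;> omega

theorem degree_arcExp {V : Type*} [DecidableEq V] {G : SimpleGraph V} (D : GraphOrientation G)
    {s : Finset (V × V)} (hs : s ⊆ D.edges) : (arcExp D s).degree = #D.edges := by
  simp [arcExp, map_sum, Finset.card_sdiff_add_card_eq_card hs]

/-- The transfer matrix is symmetric or antisymmetric: complementing the set of arcs contributing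
their tails matches the terms of the entries `(S, T)` and `(T, S)`. Comparing degrees, only
entries with `|S| = |T|` are nonzero, so the sign `(-1)^|T|` does not break the symmetry. -/
theorem transferMatrix_transpose {V : Type*} [Fintype V] [DecidableEq V] {G : SimpleGraph V}
    [DecidableRel G.Adj] (hEven : ∀ v, Even (G.degree v)) (D : GraphOrientation G) :
    (transferMatrix D).transpose = ((-1 : ℝ) ^ #D.edges) • transferMatrix D := by
  ext S T
  simp only [Matrix.transpose_apply, Matrix.smul_apply, smul_eq_mul, transferMatrix,
    Matrix.of_apply, coeff_eq_sum, Finset.mul_sum]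
  refine Finset.sum_nbij' (fun s => D.edges \ s) (fun s => D.edges \ s) ?_ ?_ ?_ ?_ ?_
  · simp
  · simp
  · intro s hs
    exact Finset.sdiff_sdiff_eq_self (Finset.mem_powerset.1 hs)
  · intro s hs
    exact Finset.sdiff_sdiff_eq_self (Finset.mem_powerset.1 hs)
  · intro s hs
    rw [Finset.mem_powerset] at hs
    have hadd := arcExp_add_arcExp hEven D hs T S
    have hiff : arcExp D s + (indic S + indic Tᶜ) = centralExp G ↔
        arcExp D (D.edges \ s) + (indic T + indic Sᶜ) = centralExp G := by
      constructor
      · intro h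
        rw [h] at hadd
        exact add_left_cancel hadd
      · intro h
        rw [h] at hadd
        exact add_right_cancel hadd
    by_cases h : arcExp D s + (indic S + indic Tᶜ) = centralExp G
    · have h' := hiff.1 h
      rw [if_pos h, if_pos h']
      have hdeg := congrArg Finsupp.degree (h.trans h'.symm)
      have hind : ∀ R : Finset V, (indic R).degree = #R := by
        intro R
        simp [indic, map_sum]
      have hS := Finset.card_add_card_compl S
      have hT := Finset.card_add_card_compl T
      simp only [map_add, degree_arcExp D hs, degree_arcExp D Finset.sdiff_subset, hind] at hdeg
      have hcard : #S = #T := by omega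
      have hsum := Finset.card_sdiff_add_card_eq_card hs
      rw [hcard, ← hsum, pow_add]
      have hsq : ((-1 : ℝ) ^ #(D.edges \ s)) * (-1) ^ #(D.edges \ s) = 1 := by
        rw [← mul_pow]; simp
      linear_combination (-(-1 : ℝ) ^ #s * (-1) ^ #T) * hsq
    · rw [if_neg h, if_neg (mt hiff.2 h)]
      simp

/-- The coefficient at `ξ` is, up to sign, the entry `(S, T)` with `S = {ξ > deg/2}` and
`T = {ξ < deg/2}`. -/
theorem transferMatrix_ne_zero {V : Type*} [Fintype V] [DecidableEq V] {G : SimpleGraph V}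
    [DecidableRel G.Adj] (hEven : ∀ v, Even (G.degree v)) (D : GraphOrientation G) (ξ : V →₀ ℕ)
    (hne : coeff ξ (graphPoly D) ≠ 0) (hac : ∀ v, |2 * (ξ v : ℤ) - (G.degree v : ℤ)| ≤ 2) :
    transferMatrix D ≠ 0 := by
  intro h
  have hm : centralExp G = ξ + (indic (univ.filter fun v => ξ v < G.degree v / 2) +
      indic (univ.filter fun v => G.degree v / 2 < ξ v)ᶜ) := by
    ext v
    obtain ⟨r, hr⟩ := hEven v
    have := abs_le.1 (hac v)
    simp only [Finsupp.add_apply, indic_apply, centralExp,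
      Finsupp.equivFunOnFinite_symm_apply_apply, Finset.mem_compl, Finset.mem_filter,
      Finset.mem_univ, true_and]
    split_ifs <;> omega
  have h0 := congrFun (congrFun h (univ.filter fun v => G.degree v / 2 < ξ v))
    (univ.filter fun v => ξ v < G.degree v / 2)
  simp only [transferMatrix, Matrix.of_apply, Matrix.zero_apply] at h0
  rw [varProd_eq_monomial, varProd_eq_monomial, monomial_mul, hm, coeff_mul_monomial] at h0
  simp [hne] at h0

/-! ### The central coefficient of the product -/

/-- If all degrees of `G` are even and the graph polynomial of `G`
(w.r.t. some fixed orientation) has a nonzero almost central coefficient, then for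
every `k ≥ 2` the graph polynomial of `G □ C_{2k}` (w.r.t. any fixed orientation)
has a nonzero central coefficient, i.e. the coefficient of
`∏_{(v,u)} x_{(v,u)}^{deg_G(v)/2 + 1}` is nonzero (note
`deg_{G □ C_{2k}}((v,u)) = deg_G(v) + 2`). -/
theorem stmt0 {V : Type*} [Fintype V] [DecidableEq V] (G : SimpleGraph V)
    [DecidableRel G.Adj]
    (hEven : ∀ v, Even (G.degree v))
    (D : GraphOrientation G) (ξ : V →₀ ℕ)
    (hne : MvPolynomial.coeff ξ (graphPoly D) ≠ 0)
    (hac : ∀ v, |2 * (ξ v : ℤ) - (G.degree v : ℤ)| ≤ 2)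
    (k : ℕ) (hk : 2 ≤ k)
    (D' : GraphOrientation (G.boxProd (SimpleGraph.cycleGraph (2 * k)))) :
    MvPolynomial.coeff
      (Finsupp.equivFunOnFinite.symm fun w : V × Fin (2 * k) => G.degree w.1 / 2 + 1)
      (graphPoly D') ≠ 0 := by
  obtain ⟨n, hn⟩ : ∃ n, 2 * k = n + 3 := ⟨2 * k - 3, by omega⟩
  have htr := trace_pow_ne_zero (transferMatrix D) _ (transferMatrix_transpose hEven D)
    (transferMatrix_ne_zero hEven D ξ hne hac) k
  revert D' htr
  rw [hn]
  intro D' htr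
  obtain ⟨c, hc, hD'⟩ := graphPoly_eq_C_mul D' (boxOrientation D n)
  rw [hD', coeff_C_mul, coeff_graphPoly_boxOrientation]
  exact mul_ne_zero hc htr
end

section
/- Let F be a field, n ≥ 1, and a, b ∈ ℤ_{≥0}^n. Let Q ∈ F[x_1,…,x_n] with deg Q ≤ |a| = a_1+…+a_n, and let R ∈ F[x_1,…,x_n,y_1,…,y_n] be homogeneous of degree |b|. Set P(x,y) = Q(x)·R(x,y). For k ≥ 1 consider nk variables x^1,…,x^k (each x^j = (x^j_1,…,x^j_n), with x^{k+1} ≡ x^1) and P_k = ∏_{j=1}^k P(x^j, x^{j+1}). Let I be the (finite) set of pairs α = (α¹, α²) with α¹, α² ∈ ℤ_{≥0}^n and |α¹| + |α²| = |b|, and define the matrix Φ ∈ F^{I × I} by Φ(α, β) = ([x^{α¹} y^{α²}]R) · ([x^{a + b − α¹ − β²}]Q), where a coefficient with a negative exponent entry is 0. Then the coefficient of ∏_{j=1}^k (x^j)^{a+b} in P_k equals tr(Φ^k). -/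
/-!
Expand each factor `R(x^j, x^{j+1})` of `P_k` into monomials. As `R` is homogeneous of degree
`|b|`, a choice of one monomial per factor is a map `f : Fin k → PhiIndex n |b|`. The chosen
monomials give the variables `x^{j+1}` the exponent `(f (j+1))¹ + (f j)²`, and the rest of the
exponent `a + b` has to come from `Q(x^{j+1})`. The polynomials `Q(x^j)` live in disjoint blocks of
variables, so their coefficients multiply (`coeff_prod_rename_block`), and the contribution of `f`
is `∏ j, Φ (f (j+1)) (f j)`. Summed over `f` this is the closed-walk expansion of `tr (Φ ^ k)`,
with the walks traversed backwards (`trace_pow_eq_sum_reversed_walks`).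
-/

open MvPolynomial Finset

/-- Index set for the matrix `Φ`: pairs `α = (α¹, α²)` of exponent vectors in
`ℤ_{≥0}^n` with `|α¹| + |α²| = B`. (Each entry is then at most `B`, so entries
are recorded in `Fin (B + 1)`.) -/
abbrev PhiIndex (n B : ℕ) :=
  {p : (Fin n → Fin (B + 1)) × (Fin n → Fin (B + 1)) //
    (∑ i, (p.1 i : ℕ)) + (∑ i, (p.2 i : ℕ)) = B}

/-- The matrix `Φ(α, β) = ([x^{α¹} y^{α²}]R) · ([x^{a+b-α¹-β²}]Q)`, where a
coefficient with a negative exponent entry is interpreted as `0`. -/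
noncomputable def PhiMatrix (F : Type*) [Field F] (n : ℕ) (a b : Fin n → ℕ)
    (Q : MvPolynomial (Fin n) F) (R : MvPolynomial ((Fin n) ⊕ (Fin n)) F) :
    Matrix (PhiIndex n (∑ i, b i)) (PhiIndex n (∑ i, b i)) F :=
  fun α β =>
    R.coeff (Finsupp.equivFunOnFinite.symm
        (Sum.elim (fun i => (α.1.1 i : ℕ)) fun i => (α.1.2 i : ℕ))) *
      if ∀ i, (α.1.1 i : ℕ) + (β.1.2 i : ℕ) ≤ a i + b i then
        Q.coeff (Finsupp.equivFunOnFinite.symm fun i =>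
          a i + b i - (α.1.1 i : ℕ) - (β.1.2 i : ℕ))
      else 0

/-- The polynomial `P_k = ∏_{j=1}^k P(x^j, x^{j+1})` in the `nk` variables
`x^j_i` (with `x^{k+1} ≡ x^1`), where `P(x, y) = Q(x) · R(x, y)`. -/
noncomputable def Pk (F : Type*) [Field F] (n k : ℕ) [NeZero k]
    (Q : MvPolynomial (Fin n) F) (R : MvPolynomial ((Fin n) ⊕ (Fin n)) F) :
    MvPolynomial (Fin k × Fin n) F :=
  ∏ j : Fin k,
    (Q.rename Sum.inl * R).rename (Sum.elim (fun i => (j, i)) fun i => (j + 1, i))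

/-- The `(i, j)` entry of `M ^ (m + 1)` as a sum over walks from `i` to `j` with interior
vertices `g`. -/
lemma pow_succ_apply_eq_sum_walks {I F : Type*} [Fintype I] [DecidableEq I] [Field F]
    (M : Matrix I I F) (m : ℕ) (i j : I) :
    (M ^ (m + 1)) i j = ∑ g : Fin m → I, ∏ l : Fin (m + 1),
      M ((Fin.cons i g : Fin (m + 1) → I) l) ((Fin.snoc g j : Fin (m + 1) → I) l) := by
  induction m generalizing i with
  | zero => simp [Fin.snoc]
  | succ m ih =>
    rw [pow_succ', Matrix.mul_apply, ← (Fin.consEquiv fun _ : Fin (m + 1) => I).sum_comp,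
      Fintype.sum_prod_type]
    refine Finset.sum_congr rfl fun c _ => ?_
    rw [ih, Finset.mul_sum]
    refine Finset.sum_congr rfl fun g _ => ?_
    change _ = ∏ l, M ((Fin.cons i (Fin.cons c g : Fin (m + 1) → I) : Fin (m + 2) → I) l)
      ((Fin.snoc (Fin.cons c g : Fin (m + 1) → I) j : Fin (m + 2) → I) l)
    rw [← Fin.cons_snoc_eq_snoc_cons, Fin.prod_univ_succ (n := m + 1)]
    simp only [Fin.cons_zero, Fin.cons_succ]

/-- The trace of `M ^ k` is a sum over closed walks of length `k`. -/
lemma trace_pow_eq_sum_closed_walks {I F : Type*} [Fintype I] [DecidableEq I] [Field F]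
    (M : Matrix I I F) (k : ℕ) [NeZero k] :
    (M ^ k).trace = ∑ f : Fin k → I, ∏ j, M (f j) (f (j + 1)) := by
  obtain ⟨m, rfl⟩ := Nat.exists_eq_succ_of_ne_zero (NeZero.ne k)
  rw [← (Fin.consEquiv fun _ : Fin (m + 1) => I).sum_comp, Fintype.sum_prod_type]
  refine Finset.sum_congr rfl fun i _ => ?_
  rw [Matrix.diag_apply, pow_succ_apply_eq_sum_walks]
  refine Finset.sum_congr rfl fun g _ => Finset.prod_congr rfl fun l _ => ?_
  congr 1
  induction l using Fin.lastCases with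
  | last => simp
  | cast l => simp [Fin.coeSucc_eq_succ]

/-- The closed walks traversed backwards. -/
lemma trace_pow_eq_sum_reversed_walks {I F : Type*} [Fintype I] [DecidableEq I] [Field F]
    (M : Matrix I I F) (k : ℕ) [NeZero k] :
    (M ^ k).trace = ∑ f : Fin k → I, ∏ j, M (f (j + 1)) (f j) := by
  rw [← Matrix.trace_transpose, Matrix.transpose_pow, trace_pow_eq_sum_closed_walks]
  rfl

/-- In a product of polynomials in disjoint blocks of variables, coefficients multiply. -/
lemma coeff_prod_rename_block {F : Type*} [Field F] {n k : ℕ}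
    (Q : MvPolynomial (Fin n) F) (e : Fin k × Fin n →₀ ℕ) :
    coeff e (∏ j : Fin k, rename (fun i => (j, i)) Q) =
      ∏ j : Fin k, Q.coeff (Finsupp.equivFunOnFinite.symm fun i => e (j, i)) := by
  classical
  have h1 : ∀ j : Fin k, rename (fun i => (j, i)) Q =
      ∑ s ∈ Q.support, monomial (s.mapDomain fun i => (j, i)) (Q.coeff s) := by
    intro j
    conv_lhs => rw [Q.as_sum]
    rw [map_sum]
    simp only [rename_monomial]
  have h2 : ∀ g : Fin k → Fin n →₀ ℕ,
      (∑ j, (g j).mapDomain fun i => (j, i)) = e ↔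
        g = fun j => Finsupp.equivFunOnFinite.symm fun i => e (j, i) := by
    intro g
    have h3 : ∀ j i, (∑ j', (g j').mapDomain fun i => (j', i)) (j, i) = g j i := by
      intro j i
      rw [Finsupp.finsetSum_apply, Finset.sum_eq_single j]
      · exact Finsupp.mapDomain_apply (Prod.mk_right_injective j) _ _
      · intro j' _ hj
        exact Finsupp.mapDomain_of_notMem_range _ _ (by simpa using hj)
      · simp
    constructor
    · rintro rfl
      ext j i
      simp only [Finsupp.equivFunOnFinite_symm_apply_apply, h3]
    · rintro rfl
      ext ⟨j, i⟩
      rw [h3]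
      simp
  simp only [h1]
  rw [Finset.prod_univ_sum, coeff_sum]
  simp only [← monomial_sum_prod, coeff_monomial, h2]
  rw [Finset.sum_ite_eq']
  split_ifs with h
  · rfl
  · simp only [Fintype.mem_piFinset, not_forall, mem_support_iff, not_not] at h
    obtain ⟨j, hj⟩ := h
    exact (Finset.prod_eq_zero (Finset.mem_univ j) hj).symm

/-- The exponent vector `(α¹, α²)` attached to an index `α`. -/
noncomputable def phiExp {n B : ℕ} (α : PhiIndex n B) : Fin n ⊕ Fin n →₀ ℕ :=
  Finsupp.equivFunOnFinite.symm
    (Sum.elim (fun i => (α.1.1 i : ℕ)) fun i => (α.1.2 i : ℕ))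

/-- A homogeneous polynomial of degree `B` is the sum of its monomials indexed by `PhiIndex`. -/
lemma eq_sum_phiIndex {F : Type*} [Field F] {n B : ℕ}
    (R : MvPolynomial (Fin n ⊕ Fin n) F) (hR : R.IsHomogeneous B) :
    R = ∑ α : PhiIndex n B, monomial (phiExp α) (R.coeff (phiExp α)) := by
  classical
  have hinj : Function.Injective (phiExp : PhiIndex n B → _) := by
    intro α β h
    have h' := fun s => DFunLike.congr_fun h s
    apply Subtype.ext
    apply Prod.ext
    · funext i
      simpa [phiExp, Fin.val_inj] using h' (Sum.inl i)
    · funext i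
      simpa [phiExp, Fin.val_inj] using h' (Sum.inr i)
  ext d
  rw [coeff_sum]
  simp only [coeff_monomial]
  by_cases hd : ∃ α : PhiIndex n B, phiExp α = d
  · obtain ⟨α, rfl⟩ := hd
    simp [hinj.eq_iff]
  · rw [Finset.sum_eq_zero fun α _ => if_neg fun h => hd ⟨α, h⟩]
    refine hR.coeff_eq_zero fun hdeg => hd ?_
    rw [Finsupp.degree_eq_sum, Fintype.sum_sum_type] at hdeg
    have hl : ∀ i, d (Sum.inl i) < B + 1 := fun i => by
      have := Finset.single_le_sum (f := fun i => d (Sum.inl i)) (fun _ _ => Nat.zero_le _)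
        (Finset.mem_univ i)
      omega
    have hr : ∀ i, d (Sum.inr i) < B + 1 := fun i => by
      have := Finset.single_le_sum (f := fun i => d (Sum.inr i)) (fun _ _ => Nat.zero_le _)
        (Finset.mem_univ i)
      omega
    refine ⟨⟨(fun i => ⟨_, hl i⟩, fun i => ⟨_, hr i⟩), hdeg⟩, ?_⟩
    ext (i | i) <;> simp [phiExp]

/-- The variables `x^{j+1}` occur in `R(x^{j+1}, x^{j+2})` and in `R(x^j, x^{j+1})`, so a choice
`f` of one monomial from each factor gives them the exponent `(f (j+1))¹ + (f j)²`. -/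
lemma sum_mapDomain_phiExp_apply {n B k : ℕ} [NeZero k] (f : Fin k → PhiIndex n B)
    (j : Fin k) (i : Fin n) :
    (∑ j', (phiExp (f j')).mapDomain
      (Sum.elim (fun i => (j', i)) fun i => (j' + 1, i))) (j + 1, i) =
      ((f (j + 1)).1.1 i : ℕ) + ((f j).1.2 i : ℕ) := by
  classical
  simp [Finsupp.mapDomain, Finsupp.sum_fintype, phiExp,
    Finsupp.single_apply, ite_and, Finset.sum_add_distrib]

/-- With `Q` of degree at most `|a|` and `R` homogeneous of degree
`|b|`, the coefficient of `∏_{j=1}^k (x^j)^{a+b}` in `P_k` equals `tr(Φ^k)`. -/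
theorem stmt3 (F : Type*) [Field F] (n : ℕ) (hn : 1 ≤ n) (a b : Fin n → ℕ)
    (Q : MvPolynomial (Fin n) F) (hQ : Q.totalDegree ≤ ∑ i, a i)
    (R : MvPolynomial ((Fin n) ⊕ (Fin n)) F) (hR : R.IsHomogeneous (∑ i, b i))
    (k : ℕ) [NeZero k] :
    MvPolynomial.coeff
        (Finsupp.equivFunOnFinite.symm fun p : Fin k × Fin n => a p.2 + b p.2)
        (Pk F n k Q R) =
      Matrix.trace (PhiMatrix F n a b Q R ^ k) := by
  classical
  have hPk : Pk F n k Q R = ∑ f : Fin k → PhiIndex n (∑ i, b i),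
      (∏ j : Fin k, rename (fun i => (j, i)) Q) *
        monomial (∑ j, (phiExp (f j)).mapDomain
          (Sum.elim (fun i => (j, i)) fun i => (j + 1, i)))
          (∏ j, R.coeff (phiExp (f j))) := by
    have hR' : ∀ j : Fin k,
        rename (Sum.elim (fun i => (j, i)) fun i => (j + 1, i)) R =
          ∑ α : PhiIndex n (∑ i, b i), monomial ((phiExp α).mapDomain
            (Sum.elim (fun i => (j, i)) fun i => (j + 1, i))) (R.coeff (phiExp α)) := by
      intro j
      conv_lhs => rw [eq_sum_phiIndex R hR]
      simp [map_sum, rename_monomial]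
    unfold Pk
    simp only [map_mul, rename_rename, Sum.elim_comp_inl, Finset.prod_mul_distrib, hR']
    rw [Finset.prod_univ_sum, Finset.mul_sum, Fintype.piFinset_univ]
    simp only [← monomial_sum_prod]
  rw [hPk, coeff_sum, trace_pow_eq_sum_reversed_walks]
  refine Finset.sum_congr rfl fun f _ => ?_
  rw [coeff_mul_monomial', coeff_prod_rename_block]
  -- Shift the cyclic index so that every factor is read off at position `j + 1`.
  rw [← Equiv.prod_comp (Equiv.addRight (1 : Fin k)),
    ← Equiv.prod_comp (Equiv.addRight (1 : Fin k)) (fun j => R.coeff (phiExp (f j)))]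
  simp only [Equiv.coe_addRight, Finsupp.tsub_apply, sum_mapDomain_phiExp_apply,
    Finsupp.equivFunOnFinite_symm_apply_apply]
  have hle : (∑ j, (phiExp (f j)).mapDomain
      (Sum.elim (fun i => (j, i)) fun i => (j + 1, i))) ≤
        Finsupp.equivFunOnFinite.symm (fun p : Fin k × Fin n => a p.2 + b p.2) ↔
      ∀ j ∈ (Finset.univ : Finset (Fin k)), ∀ i,
        ((f (j + 1)).1.1 i : ℕ) + ((f j).1.2 i : ℕ) ≤ a i + b i := by
    rw [Finsupp.le_def, Prod.forall, ← (Equiv.addRight (1 : Fin k)).forall_congr_right]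
    simp [sum_mapDomain_phiExp_apply]
  simp only [PhiMatrix, Finset.prod_mul_distrib, Finset.prod_ite_zero, hle, Nat.sub_sub]
  split_ifs
  · rw [mul_comm]
    rfl
  · simp
end

section
/- For any finite simple graph G on vertex set {v_1,…,v_n} with a fixed orientation of its edges and graph polynomial F_G ∈ ℝ[x_1,…,x_n], the central coefficient of F_G² is nonzero: the coefficient of ∏_{i=1}^n x_i^{deg_G(v_i)} in F_G(x)² is nonzero. (Equivalently, it equals (−1)^{|E(G)|} times the sum of squares of all coefficients of F_G, which is nonzero since F_G is a nonzero polynomial.) -/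
/-!
Expand `F_G` over all subsets `T` of the set `S` of oriented edges, where `T` records the factors
from which the head variable is chosen. The term of `T` is `(-1)^|S \ T|` times the monomial with
exponent `choiceExp S T`. Replacing `T` by `S \ T` turns this exponent into its complement with
respect to the degree sequence and changes the sign by `(-1)^|S|`, so
`coeff a F_G = (-1)^|S| * coeff b F_G` whenever `a + b` is the degree sequence
(`coeff_edgeProd_of_add_eq`). The central coefficient of `F_G²` is therefore `(-1)^|S|` times
`∑ (coeff a F_G)²`, the sum running over all `a` below the degree sequence. Every monomial of `F_G`
has such an exponent, and `F_G ≠ 0`, so this sum is positive.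
-/

open MvPolynomial Finset

/-- The exponent of the monomial obtained from `∏_{(i,j) ∈ S} (x_j - x_i)` by choosing the head
`x_j` from the factors in `T` and the tail `x_i` from the factors in `S \ T`. -/
noncomputable def choiceExp {V : Type*} [DecidableEq V] (S T : Finset (V × V)) : V →₀ ℕ :=
  ∑ e ∈ T, Finsupp.single e.2 1 + ∑ e ∈ S \ T, Finsupp.single e.1 1

theorem choiceExp_add_compl {V : Type*} [DecidableEq V] {S T : Finset (V × V)} (h : T ⊆ S) :
    choiceExp S T + choiceExp S (S \ T) =
      ∑ e ∈ S, (Finsupp.single e.1 1 + Finsupp.single e.2 1 : V →₀ ℕ) := by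
  rw [Finset.sum_add_distrib, ← Finset.sum_sdiff h, ← Finset.sum_sdiff h, choiceExp, choiceExp,
    Finset.sdiff_sdiff_eq_self h]
  abel

theorem edgeProd_eq_sum {V : Type*} [DecidableEq V] (S : Finset (V × V)) :
    (∏ e ∈ S, (X e.2 - X e.1) : MvPolynomial V ℝ) =
      ∑ T ∈ S.powerset, monomial (choiceExp S T) ((-1) ^ (S \ T).card) := by
  have hX : ∀ (T : Finset (V × V)) (g : V × V → V),
      (∏ e ∈ T, X (g e) : MvPolynomial V ℝ) = monomial (∑ e ∈ T, Finsupp.single (g e) 1) 1 := by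
    intro T g
    rw [monomial_sum_one]
    rfl
  simp_rw [sub_eq_add_neg]
  rw [Finset.prod_add]
  refine Finset.sum_congr rfl fun T _ => ?_
  rw [Finset.prod_neg, hX, hX, choiceExp]
  have : ((-1 : MvPolynomial V ℝ)) ^ (S \ T).card = C ((-1) ^ (S \ T).card) := by simp
  rw [this, C_mul_monomial, monomial_mul]
  simp

theorem coeff_edgeProd {V : Type*} [DecidableEq V] (S : Finset (V × V)) (a : V →₀ ℕ) :
    coeff a (∏ e ∈ S, (X e.2 - X e.1) : MvPolynomial V ℝ) =
      ∑ T ∈ S.powerset, if choiceExp S T = a then (-1) ^ (S \ T).card else 0 := by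
  rw [edgeProd_eq_sum, coeff_sum]
  simp only [coeff_monomial]

/-- The coefficients of the edge product are symmetric, up to a global sign, under complementation
of exponents with respect to the degree sequence. -/
theorem coeff_edgeProd_of_add_eq {V : Type*} [DecidableEq V] (S : Finset (V × V)) (a b : V →₀ ℕ)
    (hab : a + b = ∑ e ∈ S, (Finsupp.single e.1 1 + Finsupp.single e.2 1 : V →₀ ℕ)) :
    coeff a (∏ e ∈ S, (X e.2 - X e.1) : MvPolynomial V ℝ) =
      (-1) ^ S.card * coeff b (∏ e ∈ S, (X e.2 - X e.1) : MvPolynomial V ℝ) := by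
  rw [coeff_edgeProd, coeff_edgeProd, Finset.mul_sum]
  refine Finset.sum_nbij' (fun T => S \ T) (fun T => S \ T) (by simp) (by simp)
    (fun T hT => Finset.sdiff_sdiff_eq_self (Finset.mem_powerset.1 hT))
    (fun T hT => Finset.sdiff_sdiff_eq_self (Finset.mem_powerset.1 hT)) ?_
  intro T hT
  have hTS := Finset.mem_powerset.1 hT
  have hsum := (choiceExp_add_compl hTS).trans hab.symm
  have hiff : choiceExp S T = a ↔ choiceExp S (S \ T) = b := by
    constructor
    · rintro rfl
      exact add_left_cancel hsum
    · rintro rfl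
      exact add_right_cancel hsum
  rw [Finset.sdiff_sdiff_eq_self hTS]
  by_cases h : choiceExp S T = a
  · rw [if_pos h, if_pos (hiff.1 h), ← Finset.card_sdiff_add_card_eq_card hTS, pow_add, mul_assoc,
      ← mul_pow]
    simp
  · rw [if_neg h, if_neg (mt hiff.2 h), mul_zero]

theorem sum_single_eq_degree {V : Type*} [Fintype V] [DecidableEq V] (G : SimpleGraph V)
    [DecidableRel G.Adj] (D : GraphOrientation G) :
    (∑ e ∈ D.edges, (Finsupp.single e.1 1 + Finsupp.single e.2 1 : V →₀ ℕ)) =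
      Finsupp.equivFunOnFinite.symm fun v => G.degree v := by
  ext v
  have hunion : G.neighborFinset v =
      (D.edges.filter fun e => e.1 = v).image Prod.snd ∪
        (D.edges.filter fun e => e.2 = v).image Prod.fst := by
    ext w
    simp only [SimpleGraph.mem_neighborFinset, Finset.mem_union, Finset.mem_image,
      Finset.mem_filter, Prod.exists]
    constructor
    · intro h
      by_cases hvw : (v, w) ∈ D.edges
      · exact Or.inl ⟨v, w, ⟨hvw, rfl⟩, rfl⟩
      · exact Or.inr ⟨w, v, ⟨(D.mem_iff_not_swap_mem w v h.symm).2 hvw, rfl⟩, rfl⟩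
    · rintro (⟨x, y, ⟨h, rfl⟩, rfl⟩ | ⟨x, y, ⟨h, rfl⟩, rfl⟩)
      · exact D.adj_of_mem _ h
      · exact (D.adj_of_mem _ h).symm
  have hdisj : Disjoint ((D.edges.filter fun e => e.1 = v).image Prod.snd)
      ((D.edges.filter fun e => e.2 = v).image Prod.fst) := by
    rw [Finset.disjoint_left]
    intro w h1 h2
    simp only [Finset.mem_image, Finset.mem_filter, Prod.exists] at h1 h2
    obtain ⟨x, y, ⟨h, rfl⟩, rfl⟩ := h1
    obtain ⟨x', y', ⟨h', rfl⟩, rfl⟩ := h2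
    exact (D.mem_iff_not_swap_mem _ _ (D.adj_of_mem _ h)).1 h h'
  have hdeg : G.degree v = (D.edges.filter fun e => e.1 = v).card +
      (D.edges.filter fun e => e.2 = v).card := by
    rw [← SimpleGraph.card_neighborFinset_eq_degree, hunion, Finset.card_union_of_disjoint hdisj,
      Finset.card_image_of_injOn, Finset.card_image_of_injOn]
    · rintro ⟨x, y⟩ h ⟨x', y'⟩ h' hxx
      simp_all
    · rintro ⟨x, y⟩ h ⟨x', y'⟩ h' hxx
      simp_all
  simp [Finset.sum_add_distrib, Finsupp.single_apply, hdeg]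

theorem graphPoly_ne_zero {V : Type*} {G : SimpleGraph V} (D : GraphOrientation G) :
    graphPoly D ≠ 0 := by
  rw [graphPoly, Finset.prod_ne_zero_iff]
  intro e he h
  exact (D.adj_of_mem e he).ne (X_injective (sub_eq_zero.1 h)).symm

/-- For any finite simple graph `G` with a fixed orientation of its
edges, the central coefficient of `F_G²` — the coefficient of
`∏_v x_v^{deg_G(v)}` — is nonzero. -/
theorem stmt5 {V : Type*} [Fintype V] [DecidableEq V] (G : SimpleGraph V)
    [DecidableRel G.Adj] (D : GraphOrientation G) :
    MvPolynomial.coeff (Finsupp.equivFunOnFinite.symm fun v => G.degree v)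
      (graphPoly D ^ 2) ≠ 0 := by
  rw [← sum_single_eq_degree G D, pow_two, coeff_mul]
  have hsq : ∀ p ∈ HasAntidiagonal.antidiagonal
      (∑ e ∈ D.edges, (Finsupp.single e.1 1 + Finsupp.single e.2 1 : V →₀ ℕ)),
      coeff p.1 (graphPoly D) * coeff p.2 (graphPoly D) =
        (-1) ^ D.edges.card * coeff p.2 (graphPoly D) ^ 2 := by
    intro p hp
    rw [graphPoly, coeff_edgeProd_of_add_eq _ _ _ (HasAntidiagonal.mem_antidiagonal.1 hp)]
    ring
  rw [Finset.sum_congr rfl hsq, ← Finset.mul_sum]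
  refine mul_ne_zero (pow_ne_zero _ (by norm_num)) (ne_of_gt ?_)
  obtain ⟨b, hb⟩ := ne_zero_iff.1 (graphPoly_ne_zero D)
  -- A nonzero coefficient comes from some choice `T`; its complement supplies the partner of `b`.
  obtain ⟨T, hT, hTb⟩ : ∃ T ∈ D.edges.powerset, choiceExp D.edges T = b := by
    by_contra! hno
    refine hb ?_
    rw [graphPoly, coeff_edgeProd]
    exact Finset.sum_eq_zero fun T hT => if_neg (hno T hT)
  refine Finset.sum_pos' (fun p _ => sq_nonneg _)
    ⟨(choiceExp D.edges (D.edges \ T), b), ?_, by positivity⟩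
  rw [HasAntidiagonal.mem_antidiagonal, ← hTb, add_comm]
  exact choiceExp_add_compl (Finset.mem_powerset.1 hT)
end
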